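/- Let ĉ be an s-recurrent configuration and let c := φ(ĉ). Then there exists a finite sequence of legal firing moves c = c₀ →(v₁) c₁ →(v₂) ⋯ →(v_k) c_k = c from c back to itself (where →(vᵢ) denotes a legal firing of vertex vᵢ) satisfying: (i) every vertex v ∈ V is fired exactly r(v) times; (ii) whenever vᵢ = s, one has c_{i−1}(v) < deg⁺(v) for all v ∈ V∖{s}; and (iii) there exists an index i ≤ k with vᵢ = s and c_{i−1}(s) = deg⁺(s). -/

import Mathlib

/-!
A legal firing sequence is determined, up to order, by its firing vector, and whether a vertex can
be fired next depends only on the firing vector of what has been fired before. The first firing of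
a legal sequence that exceeds a given smaller firing vector is therefore still legal there, so a
legal sequence may be rearranged greedily, following any preference among the active vertices; the
same holds after subtracting a null vector of the Laplacian.

Consequently a recurrent configuration returns to itself by a legal sequence whose firing vector is
the primitive period vector, while any legal closed sequence firing every vertex certifies
recurrence. Starting from `c = φ(ĉ)`, which is stable off `s`, the period can be rearranged so that
`s` fires only when no other vertex is active. If `s` never fired with exactly `deg⁺(s)` chips, then
one chip could be removed from `s` without affecting legality, and the resulting smaller
configuration would again be recurrent, contradicting the minimality of `χ(ĉ)`.
-/

open Finset Polynomial

namespace SandpileBM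

variable {V E : Type} [Fintype V] [DecidableEq V] [Fintype E] [DecidableEq E]

/-- The number of edges from `v` to `w` in the multigraph given by `src`, `tgt`. -/
def numEdges (src tgt : E → V) (v w : V) : ℕ :=
  (Finset.univ.filter fun e => src e = v ∧ tgt e = w).card

/-- The out-degree of a vertex. -/
def outdeg (src : E → V) (v : V) : ℕ :=
  (Finset.univ.filter fun e => src e = v).card

/-- The in-degree of a vertex. -/
def indeg (tgt : E → V) (v : V) : ℕ :=
  (Finset.univ.filter fun e => tgt e = v).card

/-- The digraph is strongly connected: any vertex is reachable from any other by
a directed path. -/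
def StronglyConnected (src tgt : E → V) : Prop :=
  ∀ v w : V, Relation.ReflTransGen (fun a b => ∃ e : E, src e = a ∧ tgt e = b) v w

/-- Result of firing the vertex `v` on the chip configuration `c` (sinkless model). -/
def fire (src tgt : E → V) (c : V → ℕ) (v : V) : V → ℕ :=
  fun w => c w + numEdges src tgt v w - (if w = v then outdeg src v else 0)

/-- One legal firing move in the sinkless model. -/
def FireStep (src tgt : E → V) (c d : V → ℕ) : Prop :=
  ∃ v : V, outdeg src v ≤ c v ∧ d = fire src tgt c v

/-- `Reach c d`: `d` is obtained from `c` by a finite sequence of legal firing moves. -/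
def Reach (src tgt : E → V) : (V → ℕ) → (V → ℕ) → Prop :=
  Relation.ReflTransGen (FireStep src tgt)

/-- Stability of a chip configuration. -/
def Stable (src : E → V) (c : V → ℕ) : Prop :=
  ∀ v : V, c v < outdeg src v

/-- A chip configuration is recurrent if it is not stable and every configuration
accessible from it can reach it back. -/
def Recurrent (src tgt : E → V) (c : V → ℕ) : Prop :=
  ¬ Stable src c ∧ ∀ d : V → ℕ, Reach src tgt c d → Reach src tgt d c

/-- Level (total number of chips) of a chip configuration. -/
def lvl (c : V → ℕ) : ℕ := ∑ v : V, c v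

/-- Indicator function of the vertex `s`. -/
def deltaS (s : V) : V → ℕ := fun v => if v = s then 1 else 0

/-- Result of firing the vertex `v` on an `s`-configuration. -/
def sfire (src tgt : E → V) (s : V) (c : {v : V // v ≠ s} → ℕ) (v : {v : V // v ≠ s}) :
    {v : V // v ≠ s} → ℕ :=
  fun w => c w + numEdges src tgt v.1 w.1 - (if w = v then outdeg src v.1 else 0)

/-- One legal s-firing move. -/
def SFireStep (src tgt : E → V) (s : V) (c d : {v : V // v ≠ s} → ℕ) : Prop :=
  ∃ v : {v : V // v ≠ s}, outdeg src v.1 ≤ c v ∧ d = sfire src tgt s c v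

/-- `SReach c d`: `d` is obtained from `c` by a finite sequence of legal s-firing moves. -/
def SReach (src tgt : E → V) (s : V) :
    ({v : V // v ≠ s} → ℕ) → ({v : V // v ≠ s} → ℕ) → Prop :=
  Relation.ReflTransGen (SFireStep src tgt s)

/-- Stability of an `s`-configuration. -/
def SStable (src : E → V) (s : V) (c : {v : V // v ≠ s} → ℕ) : Prop :=
  ∀ v : {v : V // v ≠ s}, c v < outdeg src v.1

/-- The stabilization `c°` of an `s`-configuration: the (for strongly connected digraphs,
unique) stable `s`-configuration reachable from `c` by legal s-firing moves. -/
noncomputable def stab (src tgt : E → V) (s : V) (c : {v : V // v ≠ s} → ℕ) :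
    {v : V // v ≠ s} → ℕ :=
  Classical.epsilon fun d => SReach src tgt s c d ∧ SStable src s d

/-- An `s`-configuration `c` is s-recurrent if every `s`-configuration can be completed
to one whose stabilization is `c`. -/
def SRecurrent (src tgt : E → V) (s : V) (c : {v : V // v ≠ s} → ℕ) : Prop :=
  ∀ c₁ : {v : V // v ≠ s} → ℕ, ∃ c₂ : {v : V // v ≠ s} → ℕ,
    stab src tgt s (c₁ + c₂) = c

/-- `β_s`, recording the number of edges from `s` to each other vertex. -/
def betaS (src tgt : E → V) (s : V) : {v : V // v ≠ s} → ℕ :=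
  fun v => numEdges src tgt s v.1

/-- The relation `~_s` on s-recurrent configurations: `d = (c + k·β_s)°` for some `k`. -/
def SEquiv (src tgt : E → V) (s : V) (c d : {v : V // v ≠ s} → ℕ) : Prop :=
  ∃ k : ℕ, stab src tgt s (c + k • betaS src tgt s) = d

/-- Restriction of a chip configuration to `V ∖ {s}`. -/
def restrictS (s : V) (c : V → ℕ) : {v : V // v ≠ s} → ℕ := fun v => c v.1

/-- Extension `c̄` of an `s`-configuration by `0` at `s`. -/
def extendS (s : V) (c : {v : V // v ≠ s} → ℕ) : V → ℕ :=
  fun v => if h : v = s then 0 else c ⟨v, h⟩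

/-- The s-index `χ(c)`: the least `k` such that `c̄ + k·δ_s` is recurrent. -/
noncomputable def sIndex (src tgt : E → V) (s : V) (c : {v : V // v ≠ s} → ℕ) : ℕ :=
  sInf {k : ℕ | Recurrent src tgt (extendS s c + k • deltaS s)}

/-- `φ(c) := c̄ + χ(c)·δ_s`. -/
noncomputable def phi (src tgt : E → V) (s : V) (c : {v : V // v ≠ s} → ℕ) : V → ℕ :=
  extendS s c + sIndex src tgt s c • deltaS s

/-- The s-level `slvl(c) := χ(c) + Σ_{v ≠ s} c(v)`. -/
noncomputable def slvl (src tgt : E → V) (s : V) (c : {v : V // v ≠ s} → ℕ) : ℕ :=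
  sIndex src tgt s c + ∑ v : {v : V // v ≠ s}, c v

/-- The d-level `dlvl(c) := deg⁺(s) + Σ_{v ≠ s} c(v)`. -/
def dlvl (src : E → V) (s : V) (c : {v : V // v ≠ s} → ℕ) : ℕ :=
  outdeg src s + ∑ v : {v : V // v ≠ s}, c v

/-- The set (as a type) of recurrent chip configurations. -/
abbrev RecL (src tgt : E → V) := {c : V → ℕ // Recurrent src tgt c}

/-- The setoid on recurrent configurations generated by the relation `~` (i.e. `⤳`). -/
def recLSetoid (src tgt : E → V) : Setoid (RecL src tgt) :=
  Relation.EqvGen.setoid fun a b => Reach src tgt a.1 b.1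

/-- The set of `~`-classes of recurrent configurations. -/
abbrev RecLQuot (src tgt : E → V) := Quotient (recLSetoid src tgt)

/-- The set (as a type) of s-recurrent configurations. -/
abbrev RecS (src tgt : E → V) (s : V) := {c : {v : V // v ≠ s} → ℕ // SRecurrent src tgt s c}

/-- The setoid on s-recurrent configurations generated by the relation `~_s`. -/
def recSSetoid (src tgt : E → V) (s : V) : Setoid (RecS src tgt s) :=
  Relation.EqvGen.setoid fun a b => SEquiv src tgt s a.1 b.1

/-- The set of `~_s`-classes of s-recurrent configurations. -/
abbrev RecSQuot (src tgt : E → V) (s : V) := Quotient (recSSetoid src tgt s)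

/-- The level of a `~`-class of recurrent configurations (level is constant on classes). -/
noncomputable def lvlClass (src tgt : E → V) (q : RecLQuot src tgt) : ℕ :=
  sSup ((fun c : RecL src tgt => lvl c.1) '' {c | Quotient.mk (recLSetoid src tgt) c = q})

/-- The s-level of a `~_s`-class (s-level is constant on classes). -/
noncomputable def slvlClass (src tgt : E → V) (s : V) (q : RecSQuot src tgt s) : ℕ :=
  sSup ((fun c : RecS src tgt s => slvl src tgt s c.1) ''
    {c | Quotient.mk (recSSetoid src tgt s) c = q})

/-- The d-level of a `~_s`-class: the maximum d-level over the class. -/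
noncomputable def dlvlClass (src tgt : E → V) (s : V) (q : RecSQuot src tgt s) : ℕ :=
  sSup ((fun c : RecS src tgt s => dlvl src s c.1) ''
    {c | Quotient.mk (recSSetoid src tgt s) c = q})

/-- The Biggs–Merino polynomial `B(G,s;y) = Σ_{[c] ∈ Rec(G,s)/~_s} y^{dlvl([c])}`. -/
noncomputable def BM (src tgt : E → V) (s : V) : Polynomial ℤ :=
  ∑ᶠ q : RecSQuot src tgt s, X ^ dlvlClass src tgt s q

/-- `LegalSeq l c d`: firing the vertices in the list `l` in order is a sequence of
legal firing moves transforming `c` into `d` (sinkless model). -/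
def LegalSeq (src tgt : E → V) : List V → (V → ℕ) → (V → ℕ) → Prop
  | [], c, d => d = c
  | v :: l, c, d => outdeg src v ≤ c v ∧ LegalSeq src tgt l (fire src tgt c v) d

/-- `SLegalSeq l c d`: firing the vertices in the list `l` in order is a sequence of
legal s-firing moves transforming `c` into `d`. -/
def SLegalSeq (src tgt : E → V) (s : V) :
    List {v : V // v ≠ s} → ({v : V // v ≠ s} → ℕ) → ({v : V // v ≠ s} → ℕ) → Prop
  | [], c, d => d = c
  | v :: l, c, d => outdeg src v.1 ≤ c v ∧ SLegalSeq src tgt s l (sfire src tgt s c v) d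

/-- The configuration obtained from `c` after firing the vertices of `l` in order. -/
def iterFire (src tgt : E → V) (c : V → ℕ) (l : List V) : V → ℕ :=
  l.foldl (fire src tgt) c

/-- The Laplacian of the digraph applied to an integer vector:
`(Δq)(v) = deg⁺(v)·q(v) − Σ_w A(w,v)·q(w)`. -/
def lapApply (src tgt : E → V) (q : V → ℤ) : V → ℤ :=
  fun v => (outdeg src v : ℤ) * q v - ∑ w : V, (numEdges src tgt w v : ℤ) * q w

/-- `r` is the primitive period vector of the digraph: it has positive entries with
gcd `1`, lies in the kernel of the Laplacian, and generates this kernel. -/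
def IsPeriodVector (src tgt : E → V) (r : V → ℕ) : Prop :=
  (∀ v : V, 0 < r v) ∧ Finset.univ.gcd r = 1 ∧
    lapApply src tgt (fun v => (r v : ℤ)) = 0 ∧
    ∀ q : V → ℤ, lapApply src tgt q = 0 → ∃ k : ℤ, q = k • fun v => (r v : ℤ)

/-- The Laplacian matrix of the digraph. -/
def lapMatrix (src tgt : E → V) : Matrix V V ℤ :=
  Matrix.of fun v w =>
    if v = w then (outdeg src v : ℤ) - numEdges src tgt v v
    else -(numEdges src tgt w v : ℤ)

/-- The determinant of the reduced Laplacian obtained by deleting the row and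
column indexed by `v`. -/
def reducedLapDet (src tgt : E → V) (v : V) : ℤ :=
  (((lapMatrix src tgt).submatrix (fun a : {w : V // w ≠ v} => a.1)
    (fun a : {w : V // w ≠ v} => a.1)).det)

/-- The period constant `α := gcd_{v ∈ V} det Δ_v`. -/
def periodConstant (src tgt : E → V) : ℤ :=
  Finset.univ.gcd (reducedLapDet src tgt)

/-- `IsWalk l a b`: the list of edges `l` forms a directed walk from `a` to `b`. -/
def IsWalk (src tgt : E → V) : List E → V → V → Prop
  | [], a, b => a = b
  | e :: l, a, b => src e = a ∧ IsWalk src tgt l (tgt e) b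

/-- `IsPath l a b`: the list of edges `l` forms a directed path from `a` to `b`:
all visited vertices are distinct (except that the final vertex is allowed to
coincide with the starting vertex). -/
def IsPath (src tgt : E → V) (l : List E) (a b : V) : Prop :=
  IsWalk src tgt l a b ∧ (l.map tgt).Nodup ∧ a ∉ (l.map tgt).dropLast

/-- `T` is an arborescence rooted at `s`: for every vertex `v` there is a unique
directed path from `s` to `v` using only edges of `T`. -/
def IsArborescence (src tgt : E → V) (s : V) (T : Finset E) : Prop :=
  ∀ v : V, ∃! l : List E, (∀ e ∈ l, e ∈ T) ∧ IsPath src tgt l s v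

/-- The edge `e ∉ T` is externally active for the arborescence `T` (w.r.t. the linear
order on `E`): where `P₁`, `P₂` are the two edge-disjoint directed paths in `T ∪ {e}`
sharing their starting vertex and ending at `tgt e`, with `e ∈ P₁`, the smallest edge
on `P₁ ++ P₂` lies on `P₁`. -/
def ExtActive [LinearOrder E] (src tgt : E → V) (T : Finset E) (e : E) : Prop :=
  e ∉ T ∧ ∃ (u : V) (p₁ p₂ : List E),
    (∀ f ∈ p₁, f ∈ T ∨ f = e) ∧ (∀ f ∈ p₂, f ∈ T ∨ f = e) ∧
    IsPath src tgt p₁ u (tgt e) ∧ IsPath src tgt p₂ u (tgt e) ∧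
    e ∈ p₁ ∧ (∀ f ∈ p₁, f ∉ p₂) ∧
    ∃ fmin ∈ p₁, ∀ f ∈ p₁ ++ p₂, fmin ≤ f

/-- The external activity `e(T)` of an arborescence `T`. -/
noncomputable def extActivity [LinearOrder E] (src tgt : E → V) (T : Finset E) : ℕ :=
  Nat.card {e : E // ExtActive src tgt T e}

/-- The greedoid Tutte polynomial `T(G,s;y) = Σ_{T ∈ A(G,s)} y^{e(T)}`. -/
noncomputable def greedoidTutte [LinearOrder E] (src tgt : E → V) (s : V) : Polynomial ℤ :=
  ∑ᶠ T : {T : Finset E // IsArborescence src tgt s T}, X ^ extActivity src tgt T.1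

/-- `f` is a `G^r`-parking function rooted at `s`. -/
def IsParking (src tgt : E → V) (s : V) (f : {v : V // v ≠ s} → ℕ) : Prop :=
  ∀ A : Finset {v : V // v ≠ s}, A.Nonempty →
    ∃ v ∈ A, f v < Nat.card {e : E // (∀ w ∈ A, src e ≠ w.1) ∧ tgt e = v.1}

/-- The d-level of a `G^r`-parking function: `|E| − |V| + 1 − Σ_{v≠s} f(v)`. -/
noncomputable def parkDlvl (src : E → V) (s : V) (f : {v : V // v ≠ s} → ℕ) : ℕ :=
  ((Fintype.card E : ℤ) - Fintype.card V + 1 - ∑ v : {v : V // v ≠ s}, (f v : ℤ)).toNat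

/-- `σ` is an s-decreasing traversal: a sequence in which every vertex and edge of `G`
appears exactly once, satisfying (R1) every vertex other than `s` is immediately
preceded by an edge targeting it, and (R2) every edge is the `<ₑ`-maximum edge not yet
seen whose source has been seen. -/
def IsTraversal [LinearOrder E] (src tgt : E → V) (s : V) (σ : List (V ⊕ E)) : Prop :=
  σ.Nodup ∧ (∀ x : V ⊕ E, x ∈ σ) ∧
  (∀ (i : ℕ) (hi : i < σ.length) (v : V),
      σ.get ⟨i, hi⟩ = Sum.inl v → v ≠ s →
      0 < i ∧ ∃ e : E, tgt e = v ∧ σ.get ⟨i - 1, by omega⟩ = Sum.inr e) ∧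
  (∀ (i : ℕ) (hi : i < σ.length) (e : E),
      σ.get ⟨i, hi⟩ = Sum.inr e →
      Sum.inl (src e) ∈ σ.take i ∧
      ∀ f : E, Sum.inr f ∉ σ.take i → Sum.inl (src f) ∈ σ.take i → f ≤ e)

open scoped Classical in
/-- `Υ(σ)`: the set of edges immediately preceding a non-sink vertex in `σ`. -/
noncomputable def Upsilon (src tgt : E → V) (s : V) (σ : List (V ⊕ E)) : Finset E :=
  Finset.univ.filter fun e =>
    ∃ (i : ℕ) (hi : i < σ.length) (v : V), v ≠ s ∧ σ.get ⟨i, hi⟩ = Sum.inl v ∧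
      0 < i ∧ ∃ hj : i - 1 < σ.length, σ.get ⟨i - 1, hj⟩ = Sum.inr e

/-- The strength of `σ`: the number of strong edges, i.e. edges whose target appears
before them in `σ`. -/
noncomputable def strength (tgt : E → V) (σ : List (V ⊕ E)) : ℕ :=
  Nat.card {e : E // ∃ (i : ℕ) (hi : i < σ.length),
    σ.get ⟨i, hi⟩ = Sum.inr e ∧ Sum.inl (tgt e) ∈ σ.take i}

/-- `Ψ(σ)(v)`: one less than the number of edges targeting `v` that appear before the
vertex `v` in `σ`. -/
def Psi (tgt : E → V) (s : V) (σ : List (V ⊕ E)) : {v : V // v ≠ s} → ℕ :=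
  fun v =>
    (((σ.takeWhile fun x => x ≠ Sum.inl v.1).filterMap Sum.getRight?).filter
      fun e => tgt e = v.1).length - 1

section

omit [DecidableEq E]

variable {src tgt : E → V} {s : V} {c d : V → ℕ} {x y : V → ℤ} {l : List V}

/-! ### The Laplacian -/

theorem lapApply_eq_mulVec (q : V → ℤ) : lapApply src tgt q = (lapMatrix src tgt).mulVec q := by
  funext v
  have entry (w : V) : lapMatrix src tgt v w =
      (if v = w then (outdeg src v : ℤ) else 0) - numEdges src tgt w v := by
    by_cases h : v = w <;> simp [lapMatrix, h]
  simp [lapApply, Matrix.mulVec, dotProduct, entry, sub_mul]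

theorem lapApply_zero : lapApply src tgt 0 = 0 := by
  rw [lapApply_eq_mulVec, Matrix.mulVec_zero]

theorem lapApply_add (x y : V → ℤ) :
    lapApply src tgt (x + y) = lapApply src tgt x + lapApply src tgt y := by
  simp only [lapApply_eq_mulVec, Matrix.mulVec_add]

theorem lapApply_sub (x y : V → ℤ) :
    lapApply src tgt (x - y) = lapApply src tgt x - lapApply src tgt y := by
  simp only [lapApply_eq_mulVec, Matrix.mulVec_sub]

theorem lapApply_le_of_le (h : x ≤ y) (v : V) :
    lapApply src tgt y v ≤ lapApply src tgt x v + outdeg src v * (y v - x v) := by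
  have inflow : ∑ w, (numEdges src tgt w v : ℤ) * x w ≤ ∑ w, (numEdges src tgt w v : ℤ) * y w :=
    Finset.sum_le_sum fun w _ => mul_le_mul_of_nonneg_left (h w) (Nat.cast_nonneg _)
  simp only [lapApply]
  linarith

theorem sum_numEdges (v : V) : ∑ w, numEdges src tgt v w = outdeg src v := by
  simp only [numEdges, outdeg, ← Finset.filter_filter]
  exact (Finset.card_eq_sum_card_fiberwise fun e _ => Finset.mem_univ (tgt e)).symm

theorem sum_lapApply (x : V → ℤ) : ∑ v, lapApply src tgt x v = 0 := by
  simp only [lapApply, Finset.sum_sub_distrib]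
  rw [Finset.sum_comm, sub_eq_zero]
  refine Finset.sum_congr rfl fun v _ => ?_
  rw [← Finset.sum_mul, ← Nat.cast_sum, sum_numEdges]

/-! ### Configurations after a firing vector -/

/-- The number of chips on each vertex after every vertex `w` has been fired `x w` times from `c`,
in any order. It is integer valued since the firings need not be legal. -/
def chipsAfter (src tgt : E → V) (c : V → ℕ) (x : V → ℤ) : V → ℤ :=
  fun v => c v - lapApply src tgt x v

/-- The vertex `v` can be legally fired after every vertex `w` has been fired `x w` times
from `c`. -/
def IsActive (src tgt : E → V) (c : V → ℕ) (x : V → ℤ) (v : V) : Prop :=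
  (outdeg src v : ℤ) ≤ chipsAfter src tgt c x v

theorem chipsAfter_zero (v : V) : chipsAfter src tgt c 0 v = c v := by
  simp [chipsAfter, lapApply_zero]

theorem chipsAfter_of_lapApply_eq_zero (hx : lapApply src tgt x = 0) (v : V) :
    chipsAfter src tgt c x v = c v := by
  simp [chipsAfter, hx]

theorem chipsAfter_le_of_le (h : x ≤ y) (v : V) :
    chipsAfter src tgt c x v ≤ chipsAfter src tgt c y v + outdeg src v * (y v - x v) := by
  have := lapApply_le_of_le (src := src) (tgt := tgt) h v
  simp only [chipsAfter]
  linarith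

theorem chipsAfter_le_of_le_of_eq {v : V} (h : x ≤ y) (hv : x v = y v) :
    chipsAfter src tgt c x v ≤ chipsAfter src tgt c y v := by
  simpa [hv] using chipsAfter_le_of_le (c := c) h v

theorem cast_fire {v : V} (hv : outdeg src v ≤ c v) (w : V) :
    (fire src tgt c v w : ℤ) = chipsAfter src tgt c (Pi.single v 1) w := by
  have hle : (if w = v then outdeg src v else 0) ≤ c w + numEdges src tgt v w := by
    split_ifs with h
    · subst h; omega
    · exact Nat.zero_le _
  rw [fire, Nat.cast_sub hle]
  simp only [chipsAfter, lapApply, Pi.single_apply]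
  by_cases h : w = v <;> simp [h]
  ring

/-! ### Firing sequences -/

section

omit [Fintype V]

/-- The firing vector of a sequence: how often each vertex occurs in it. -/
def firingVec (l : List V) : V → ℤ :=
  fun v => l.count v

/-- Every firing in the sequence `l` satisfies `P`, which may depend on the firing vector of the
preceding part of `l` and on the vertex being fired. -/
def EachFiring (P : (V → ℤ) → V → Prop) (l : List V) : Prop :=
  ∀ (i : ℕ) (hi : i < l.length), P (firingVec (l.take i)) l[i]

theorem firingVec_nil : firingVec ([] : List V) = 0 := by
  funext v
  simp [firingVec]

theorem firingVec_nonneg (l : List V) : 0 ≤ firingVec l :=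
  fun _ => Nat.cast_nonneg _

theorem firingVec_append_singleton (l : List V) (v : V) :
    firingVec (l ++ [v]) = firingVec l + Pi.single v 1 := by
  funext w
  by_cases h : w = v
  · subst h; simp [firingVec]
  · simp [firingVec, h, Ne.symm h]

theorem eachFiring_nil (P : (V → ℤ) → V → Prop) : EachFiring P [] := by
  simp [EachFiring]

theorem eachFiring_append_singleton {P : (V → ℤ) → V → Prop} {v : V} :
    EachFiring P (l ++ [v]) ↔ EachFiring P l ∧ P (firingVec l) v := by
  constructor
  · intro h
    refine ⟨fun i hi => ?_, ?_⟩
    · have := h i (hi.trans (by simp))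
      rwa [List.getElem_append_left hi, List.take_append_of_le_length hi.le] at this
    · simpa using h l.length (by simp)
  · rintro ⟨hl, hv⟩ i hi
    rcases Nat.lt_succ_iff_lt_or_eq.1 (by simpa using hi) with h | rfl
    · simpa [List.getElem_append_left h, List.take_append_of_le_length h.le] using hl i h
    · simpa using hv

theorem legalSeq_append {m : List V} {e : V → ℕ} :
    LegalSeq src tgt (l ++ m) c e ↔
      ∃ d, LegalSeq src tgt l c d ∧ LegalSeq src tgt m d e := by
  induction l generalizing c with
  | nil => simp [LegalSeq]
  | cons v l ih => simp [LegalSeq, ih, and_assoc]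

theorem legalSeq_append_singleton {v : V} {e : V → ℕ} :
    LegalSeq src tgt (l ++ [v]) c e ↔
      ∃ d, LegalSeq src tgt l c d ∧ outdeg src v ≤ d v ∧ e = fire src tgt d v :=
  legalSeq_append

theorem LegalSeq.iterFire_eq (h : LegalSeq src tgt l c d) : iterFire src tgt c l = d := by
  induction l generalizing c with
  | nil => exact h.symm
  | cons v l ih => exact ih h.2

theorem reach_iff_exists_legalSeq : Reach src tgt c d ↔ ∃ l, LegalSeq src tgt l c d := by
  constructor
  · intro h
    induction h with
    | refl => exact ⟨[], rfl⟩
    | tail _ hstep ih =>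
      obtain ⟨l, hl⟩ := ih
      obtain ⟨v, hv, rfl⟩ := hstep
      exact ⟨l ++ [v], legalSeq_append_singleton.2 ⟨_, hl, hv, rfl⟩⟩
  · rintro ⟨l, hl⟩
    induction l generalizing c with
    | nil => exact hl ▸ Relation.ReflTransGen.refl
    | cons v l ih => exact Relation.ReflTransGen.head ⟨v, hl.1, rfl⟩ (ih hl.2)

theorem LegalSeq.flatten_replicate (h : LegalSeq src tgt l c c) (n : ℕ) :
    LegalSeq src tgt (List.replicate n l).flatten c c := by
  induction n with
  | zero => rfl
  | succ n ih => exact legalSeq_append.2 ⟨c, h, ih⟩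

theorem Recurrent.exists_legalSeq_self (hc : Recurrent src tgt c) :
    ∃ l, l ≠ [] ∧ LegalSeq src tgt l c c := by
  obtain ⟨v, hv⟩ := not_forall.1 hc.1
  have hfire : FireStep src tgt c (fire src tgt c v) := ⟨v, not_lt.1 hv, rfl⟩
  obtain ⟨l, hl⟩ := reach_iff_exists_legalSeq.1 (hc.2 _ (Relation.ReflTransGen.single hfire))
  exact ⟨v :: l, List.cons_ne_nil v l, not_lt.1 hv, hl⟩

end

theorem sum_firingVec (l : List V) : ∑ v, firingVec l v = l.length := by
  have h := Multiset.sum_count_eq_card (s := Finset.univ) (m := (l : Multiset V))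
    fun v _ => Finset.mem_univ v
  simp only [Multiset.coe_count, Multiset.coe_card] at h
  simp only [firingVec]
  exact_mod_cast h

theorem LegalSeq.cast_apply (h : LegalSeq src tgt l c d) (v : V) :
    (d v : ℤ) = chipsAfter src tgt c (firingVec l) v := by
  induction l using List.reverseRecOn generalizing d v with
  | nil => rw [firingVec_nil, chipsAfter_zero, show d = c from h]
  | append_singleton l u ih =>
    obtain ⟨e, hl, hu, rfl⟩ := legalSeq_append_singleton.1 h
    rw [cast_fire hu, chipsAfter, ih hl, firingVec_append_singleton, chipsAfter, chipsAfter,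
      lapApply_add, Pi.add_apply]
    ring

theorem LegalSeq.chipsAfter_add (h : LegalSeq src tgt l c d) (x : V → ℤ) :
    chipsAfter src tgt c (firingVec l + x) = chipsAfter src tgt d x := by
  funext v
  rw [chipsAfter, chipsAfter, h.cast_apply, chipsAfter, lapApply_add, Pi.add_apply]
  ring

theorem LegalSeq.eachFiring (h : LegalSeq src tgt l c d) :
    EachFiring (IsActive src tgt c) l := by
  induction l using List.reverseRecOn generalizing d with
  | nil => exact eachFiring_nil _
  | append_singleton l v ih =>
    obtain ⟨e, hl, hv, -⟩ := legalSeq_append_singleton.1 h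
    refine eachFiring_append_singleton.2 ⟨ih hl, ?_⟩
    rw [IsActive, ← hl.cast_apply]
    exact_mod_cast hv

theorem EachFiring.exists_legalSeq (h : EachFiring (IsActive src tgt c) l) :
    ∃ d, LegalSeq src tgt l c d := by
  induction l using List.reverseRecOn with
  | nil => exact ⟨c, rfl⟩
  | append_singleton l v ih =>
    obtain ⟨hl, hv⟩ := eachFiring_append_singleton.1 h
    obtain ⟨d, hd⟩ := ih hl
    rw [IsActive, ← hd.cast_apply] at hv
    exact ⟨_, legalSeq_append_singleton.2 ⟨d, hd, by exact_mod_cast hv, rfl⟩⟩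

theorem EachFiring.legalSeq (h : EachFiring (IsActive src tgt c) l)
    (hd : ∀ v, chipsAfter src tgt c (firingVec l) v = d v) : LegalSeq src tgt l c d := by
  obtain ⟨e, he⟩ := h.exists_legalSeq
  obtain rfl : e = d := by
    funext v
    exact_mod_cast (he.cast_apply v).trans (hd v)
  exact he

theorem LegalSeq.cast_iterFire_take (h : LegalSeq src tgt l c d) (i : ℕ) (v : V) :
    (iterFire src tgt c (l.take i) v : ℤ) =
      chipsAfter src tgt c (firingVec (l.take i)) v := by
  rw [← List.take_append_drop i l] at h
  obtain ⟨e, he, -⟩ := legalSeq_append.1 h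
  rw [he.iterFire_eq, he.cast_apply]

theorem LegalSeq.lvl_eq (h : LegalSeq src tgt l c d) : lvl d = lvl c := by
  have : ∑ v, (d v : ℤ) = ∑ v, (c v : ℤ) := by
    simp only [h.cast_apply, chipsAfter, Finset.sum_sub_distrib, sum_lapApply, sub_zero]
  exact_mod_cast this

theorem LegalSeq.lapApply_firingVec (h : LegalSeq src tgt l c c) :
    lapApply src tgt (firingVec l) = 0 := by
  funext v
  have := h.cast_apply v
  rw [chipsAfter] at this
  rw [Pi.zero_apply]
  linarith

/-! ### The exchange argument -/

/-- The first firing of `l` exceeding the budget `x` is still legal after `x`: its vertex has by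
then been fired equally often, and the additional firings of other vertices only add chips. -/
theorem EachFiring.exists_lt_isActive (hl : EachFiring (IsActive src tgt c) l) (hx : 0 ≤ x)
    (h : ¬ firingVec l ≤ x) : ∃ v, x v < firingVec l v ∧ IsActive src tgt c x v := by
  induction l using List.reverseRecOn with
  | nil => exact absurd hx (firingVec_nil (V := V) ▸ h)
  | append_singleton l u ih =>
    obtain ⟨hl, hu⟩ := eachFiring_append_singleton.1 hl
    rw [firingVec_append_singleton] at h ⊢
    by_cases hle : firingVec l ≤ x
    · have hxu : x u = firingVec l u := by
        refine le_antisymm ?_ (hle u)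
        by_contra! hlt
        refine h fun w => ?_
        by_cases hw : w = u
        · subst hw; simpa using hlt
        · simpa [hw] using hle w
      exact ⟨u, by simp [hxu], hu.trans (chipsAfter_le_of_le_of_eq hle hxu.symm)⟩
    · obtain ⟨v, hv, hact⟩ := ih hl hle
      have hsingle : (0 : V → ℤ) ≤ Pi.single u 1 := Pi.single_nonneg.2 zero_le_one
      exact ⟨v, hv.trans_le (le_add_of_nonneg_right (hsingle v)), hact⟩

section

omit [Fintype V]

variable [Finite V]

theorem exists_firingVec_eq_and_eachFiring {P : (V → ℤ) → V → Prop} {z : V → ℤ}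
    (hz : 0 ≤ z) (hP : ∀ x, 0 ≤ x → x < z → ∃ v, x v < z v ∧ P x v) :
    ∃ l, firingVec l = z ∧ EachFiring P l := by
  have := Fintype.ofFinite V
  have greedy (n : ℕ) (hn : n ≤ ∑ v, z v) :
      ∃ l : List V, l.length = n ∧ firingVec l ≤ z ∧ EachFiring P l := by
    induction n with
    | zero => exact ⟨[], rfl, firingVec_nil.trans_le hz, eachFiring_nil P⟩
    | succ n ih =>
      obtain ⟨l, rfl, hlz, hl⟩ := ih (by push_cast at hn; omega)
      have hne : firingVec l ≠ z := by
        rintro rfl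
        rw [sum_firingVec] at hn
        omega
      obtain ⟨v, hv, hPv⟩ := hP _ (firingVec_nonneg l) (lt_of_le_of_ne hlz hne)
      refine ⟨l ++ [v], by simp, fun w => ?_, eachFiring_append_singleton.2 ⟨hl, hPv⟩⟩
      rw [firingVec_append_singleton]
      by_cases hw : w = v
      · subst hw; simpa using hv
      · simpa [hw] using hlz w
  obtain ⟨n, hn⟩ := Int.eq_ofNat_of_zero_le (Finset.sum_nonneg fun v _ => hz v)
  obtain ⟨l, hlen, hlz, hl⟩ := greedy n hn.ge
  have hsum : ∑ v, firingVec l v = ∑ v, z v := by rw [sum_firingVec, hlen, hn]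
  exact ⟨l, funext fun v =>
    (Finset.sum_eq_sum_iff_of_le fun v _ => hlz v).1 hsum v (Finset.mem_univ v), hl⟩

theorem LegalSeq.reach_of_firingVec_le {m : List V} {e : V → ℕ} (hm : LegalSeq src tgt m c d)
    (hl : LegalSeq src tgt l c e) (hle : firingVec m ≤ firingVec l) : Reach src tgt d e := by
  have := Fintype.ofFinite V
  obtain ⟨q, hqz, hq⟩ := exists_firingVec_eq_and_eachFiring (P := IsActive src tgt d)
    (sub_nonneg.2 hle) fun x hx0 hx => by
      have hlt : ¬ firingVec l ≤ firingVec m + x := fun h => hx.not_ge (sub_le_iff_le_add'.2 h)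
      obtain ⟨v, hv, hact⟩ :=
        hl.eachFiring.exists_lt_isActive (add_nonneg (firingVec_nonneg m) hx0) hlt
      rw [IsActive, hm.chipsAfter_add] at hact
      exact ⟨v, lt_sub_iff_add_lt'.2 hv, hact⟩
  refine reach_iff_exists_legalSeq.2 ⟨q, hq.legalSeq fun v => ?_⟩
  rw [← hm.chipsAfter_add, hqz, add_sub_cancel, hl.cast_apply]

end

theorem LegalSeq.exists_eachFiring_imp_forall_ne_lt_outdeg (hl : LegalSeq src tgt l c d)
    (hd : ∀ v, v ≠ s → d v < outdeg src v) :
    ∃ m, LegalSeq src tgt m c d ∧ firingVec m = firingVec l ∧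
      EachFiring (fun x v => v = s → ∀ w, w ≠ s → chipsAfter src tgt c x w < outdeg src w) m := by
  obtain ⟨m, hml, hm⟩ := exists_firingVec_eq_and_eachFiring
    (P := fun x v => IsActive src tgt c x v ∧
      (v = s → ∀ w, w ≠ s → chipsAfter src tgt c x w < outdeg src w))
    (firingVec_nonneg l) fun x hx0 hx => by
      by_cases h : ∃ v, v ≠ s ∧ IsActive src tgt c x v
      · obtain ⟨v, hvs, hv⟩ := h
        refine ⟨v, lt_of_le_of_ne (hx.le v) fun hxv => ?_, hv, fun h => absurd h hvs⟩
        have hvd : (outdeg src v : ℤ) ≤ d v :=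
          hl.cast_apply v ▸ hv.trans (chipsAfter_le_of_le_of_eq hx.le hxv)
        exact (hd v hvs).not_ge (by exact_mod_cast hvd)
      · obtain ⟨v, hv, hact⟩ := hl.eachFiring.exists_lt_isActive hx0 hx.not_ge
        exact ⟨v, hv, hact, fun _ w hw => not_le.1 fun hle => h ⟨w, hw, hle⟩⟩
  have hact : EachFiring (IsActive src tgt c) m := fun i hi => (hm i hi).1
  exact ⟨m, hact.legalSeq fun v => by rw [hml, hl.cast_apply], hml, fun i hi => (hm i hi).2⟩

/-! ### Recurrence and periods -/

omit [Fintype V] in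
theorem LegalSeq.recurrent [Finite V] [Nonempty V] (hl : LegalSeq src tgt l c c)
    (hmem : ∀ v, v ∈ l) : Recurrent src tgt c := by
  constructor
  · intro hstable
    match l, hl, hmem with
    | [], _, hmem => exact List.not_mem_nil (hmem (Classical.arbitrary V))
    | v :: _, hl, _ => exact (hstable v).not_ge hl.1
  · intro d hd
    obtain ⟨m, hm⟩ := reach_iff_exists_legalSeq.1 hd
    refine hm.reach_of_firingVec_le (hl.flatten_replicate m.length) fun v => ?_
    have hcount : m.count v ≤ m.length * l.count v :=
      List.count_le_length.trans (Nat.le_mul_of_pos_right _ (List.count_pos_iff.2 (hmem v)))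
    simpa [firingVec, List.count_flatten] using mod_cast hcount

/-- A null vector `z` of the Laplacian may be subtracted from firing vectors, which turns the
exchange argument at `firingVec l + x - z` into one at `x`. -/
theorem LegalSeq.exists_lt_isActive_of_lapApply_eq_zero {z : V → ℤ}
    (hl : LegalSeq src tgt l c d) (hz : lapApply src tgt z = 0) (hle : z ≤ firingVec l + x)
    (h : ¬ z ≤ x) : ∃ v, x v < z v ∧ IsActive src tgt d x v := by
  have hnonneg : 0 ≤ firingVec l + (x - z) := by
    rw [← add_sub_assoc]
    exact sub_nonneg.2 hle
  have hlt : ¬ firingVec l ≤ firingVec l + (x - z) := by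
    rwa [le_add_iff_nonneg_right, sub_nonneg]
  obtain ⟨v, hv, hact⟩ := hl.eachFiring.exists_lt_isActive hnonneg hlt
  rw [IsActive, hl.chipsAfter_add, chipsAfter, lapApply_sub, hz, sub_zero] at hact
  rw [Pi.add_apply, Pi.sub_apply] at hv
  exact ⟨v, by omega, hact⟩

theorem IsPeriodVector.le_firingVec {r : V → ℕ} (hr : IsPeriodVector src tgt r) (hl : l ≠ [])
    (hlap : lapApply src tgt (firingVec l) = 0) (v : V) : (r v : ℤ) ≤ firingVec l v := by
  obtain ⟨k, hk⟩ := hr.2.2.2 _ hlap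
  have hkr (w : V) : firingVec l w = k * r w := congrFun hk w
  obtain ⟨u, hu⟩ := List.exists_mem_of_ne_nil l hl
  have hpos : 0 < k * r u := by
    rw [← hkr, firingVec]
    exact_mod_cast List.count_pos_iff.2 hu
  have hk1 : 0 < k := pos_of_mul_pos_left hpos (Nat.cast_nonneg _)
  rw [hkr]
  exact le_mul_of_one_le_left (Nat.cast_nonneg _) hk1

theorem Recurrent.exists_legalSeq_firingVec_eq {r : V → ℕ} (hc : Recurrent src tgt c)
    (hr : IsPeriodVector src tgt r) :
    ∃ l, LegalSeq src tgt l c c ∧ firingVec l = fun v => (r v : ℤ) := by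
  obtain ⟨m, hne, hm⟩ := hc.exists_legalSeq_self
  have hrm := hr.le_firingVec hne hm.lapApply_firingVec
  obtain ⟨l, hlr, hl⟩ := exists_firingVec_eq_and_eachFiring (P := IsActive src tgt c)
    (z := fun v => (r v : ℤ)) (fun v => Nat.cast_nonneg _) fun x hx0 hx =>
      hm.exists_lt_isActive_of_lapApply_eq_zero hr.2.2.1
        (fun v => (hrm v).trans (le_add_of_nonneg_right (hx0 v))) hx.not_ge
  exact ⟨l, hl.legalSeq (chipsAfter_of_lapApply_eq_zero (hlr ▸ hr.2.2.1)), hlr⟩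

/-! ### Stabilization -/

section

omit [Fintype V]

variable {ch : {v : V // v ≠ s} → ℕ}

theorem restrictS_fire {u : V} (hu : u ≠ s) :
    restrictS s (fire src tgt c u) = sfire src tgt s (restrictS s c) ⟨u, hu⟩ := by
  funext w
  simp [restrictS, fire, sfire, Subtype.ext_iff]

theorem sReach_restrictS_iff : SReach src tgt s (restrictS s c) ch ↔
    ∃ l d, s ∉ l ∧ LegalSeq src tgt l c d ∧ restrictS s d = ch := by
  constructor
  · intro h
    induction h with
    | refl => exact ⟨[], c, List.not_mem_nil, rfl, rfl⟩
    | tail _ hstep ih =>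
      obtain ⟨l, d, hs, hl, rfl⟩ := ih
      obtain ⟨v, hv, rfl⟩ := hstep
      exact ⟨l ++ [v.1], _, by simp [hs, v.2.symm],
        legalSeq_append_singleton.2 ⟨d, hl, hv, rfl⟩, restrictS_fire v.2⟩
  · rintro ⟨l, d, hs, hl, rfl⟩
    induction l generalizing c with
    | nil => exact hl ▸ Relation.ReflTransGen.refl
    | cons v l ih =>
      obtain ⟨hv, hsl⟩ := List.ne_and_not_mem_of_not_mem_cons hs
      refine Relation.ReflTransGen.head ⟨⟨v, hv.symm⟩, hl.1, rfl⟩ ?_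
      rw [← restrictS_fire]
      exact ih hsl hl.2

theorem extendS_add_smul_deltaS_apply_self (k : ℕ) : (extendS s ch + k • deltaS s) s = k := by
  simp [extendS, deltaS]

theorem extendS_add_smul_deltaS_apply_of_ne {v : V} (hv : v ≠ s) (k : ℕ) :
    (extendS s ch + k • deltaS s) v = ch ⟨v, hv⟩ := by
  simp [extendS, deltaS, hv]

theorem restrictS_extendS_add_smul_deltaS (k : ℕ) :
    restrictS s (extendS s ch + k • deltaS s) = ch :=
  funext fun v => extendS_add_smul_deltaS_apply_of_ne v.2 k

theorem extendS_restrictS_add_smul_deltaS (c : V → ℕ) :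
    extendS s (restrictS s c) + c s • deltaS s = c := by
  funext v
  by_cases hv : v = s
  · subst hv; exact extendS_add_smul_deltaS_apply_self _
  · exact extendS_add_smul_deltaS_apply_of_ne hv _

variable [Finite V]

theorem LegalSeq.numEdges_mul_firingVec_le (h : LegalSeq src tgt l c d) (v w : V) :
    (numEdges src tgt v w : ℤ) * firingVec l v ≤ d w + outdeg src w * firingVec l w := by
  have := Fintype.ofFinite V
  have hterm : (numEdges src tgt v w : ℤ) * firingVec l v ≤
      ∑ u, (numEdges src tgt u w : ℤ) * firingVec l u :=
    Finset.single_le_sum (f := fun u => (numEdges src tgt u w : ℤ) * firingVec l u)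
      (fun u _ => mul_nonneg (Nat.cast_nonneg _) (firingVec_nonneg l u)) (Finset.mem_univ v)
  have hd := h.cast_apply w
  simp only [chipsAfter, lapApply] at hd
  linarith [Nat.cast_nonneg (α := ℤ) (c w)]

theorem exists_firingVec_le_of_reflTransGen (src tgt : E → V) (c : V → ℕ) {v : V}
    (h : Relation.ReflTransGen (fun a b => ∃ e : E, src e = a ∧ tgt e = b) v s) :
    ∃ B : ℤ, ∀ l d, s ∉ l → LegalSeq src tgt l c d → firingVec l v ≤ B := by
  have := Fintype.ofFinite V
  induction h using Relation.ReflTransGen.head_induction_on with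
  | refl => exact ⟨0, fun l _ hs _ => by simp [firingVec, List.count_eq_zero_of_not_mem hs]⟩
  | @head a b hab _ ih =>
    obtain ⟨B, hB⟩ := ih
    obtain ⟨e, ha, hb⟩ := hab
    have hedge : (1 : ℤ) ≤ numEdges src tgt a b := by
      exact_mod_cast Finset.card_pos.2 ⟨e, by simp [ha, hb]⟩
    refine ⟨lvl c + outdeg src b * B, fun l d hs hl => ?_⟩
    have hdb : (d b : ℤ) ≤ lvl c := by
      rw [← hl.lvl_eq]
      exact_mod_cast Finset.single_le_sum (fun w _ => Nat.zero_le (d w)) (Finset.mem_univ b)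
    calc firingVec l a ≤ numEdges src tgt a b * firingVec l a :=
          le_mul_of_one_le_left (firingVec_nonneg l a) hedge
      _ ≤ d b + outdeg src b * firingVec l b := hl.numEdges_mul_firingVec_le a b
      _ ≤ lvl c + outdeg src b * B :=
          add_le_add hdb (mul_le_mul_of_nonneg_left (hB l d hs hl) (Nat.cast_nonneg _))

theorem exists_legalSeq_forall_ne_lt_outdeg (c : V → ℕ)
    (hs : ∀ v, Relation.ReflTransGen (fun a b => ∃ e : E, src e = a ∧ tgt e = b) v s) :
    ∃ l d, s ∉ l ∧ LegalSeq src tgt l c d ∧ ∀ v, v ≠ s → d v < outdeg src v := by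
  have := Fintype.ofFinite V
  choose B hB using fun v => exists_firingVec_le_of_reflTransGen src tgt c (hs v)
  let lengths : Set ℕ := {n | ∃ l d, s ∉ l ∧ LegalSeq src tgt l c d ∧ l.length = n}
  have hbdd : BddAbove lengths := by
    refine ⟨(∑ v, B v).toNat, ?_⟩
    rintro _ ⟨l, d, hsl, hl, rfl⟩
    have : ∑ v, firingVec l v ≤ ∑ v, B v := Finset.sum_le_sum fun v _ => hB v l d hsl hl
    rw [sum_firingVec] at this
    omega
  have hne : lengths.Nonempty := ⟨0, [], c, List.not_mem_nil, rfl, rfl⟩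
  obtain ⟨l, d, hsl, hl, hmax⟩ := Nat.sSup_mem hne hbdd
  refine ⟨l, d, hsl, hl, fun v hv => ?_⟩
  by_contra! hle
  have hlonger : l.length + 1 ∈ lengths :=
    ⟨l ++ [v], _, by simp [hsl, hv.symm], legalSeq_append_singleton.2 ⟨d, hl, hle, rfl⟩, by simp⟩
  have := le_csSup hbdd hlonger
  omega

theorem LegalSeq.le_firingVec_of_mul_outdeg_le (h : LegalSeq src tgt l c d) {v : V} {n : ℕ}
    (hd : d v < outdeg src v) (hc : n * outdeg src v ≤ c v) : (n : ℤ) ≤ firingVec l v := by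
  have := Fintype.ofFinite V
  have hchips := chipsAfter_le_of_le (src := src) (tgt := tgt) (c := c) (firingVec_nonneg l) v
  rw [chipsAfter_zero, ← h.cast_apply, Pi.zero_apply, sub_zero] at hchips
  zify at hd hc
  have : (n : ℤ) * outdeg src v < (firingVec l v + 1) * outdeg src v := by linarith
  exact Int.lt_add_one_iff.1 (lt_of_mul_lt_mul_right this (Nat.cast_nonneg _))

theorem stab_spec (ch : {v : V // v ≠ s} → ℕ)
    (hs : ∀ v, Relation.ReflTransGen (fun a b => ∃ e : E, src e = a ∧ tgt e = b) v s) :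
    SReach src tgt s ch (stab src tgt s ch) ∧ SStable src s (stab src tgt s ch) := by
  obtain ⟨l, d, hsl, hl, hd⟩ :=
    exists_legalSeq_forall_ne_lt_outdeg (extendS s ch + 0 • deltaS s) hs
  have hreach := sReach_restrictS_iff.2 ⟨l, d, hsl, hl, rfl⟩
  rw [restrictS_extendS_add_smul_deltaS] at hreach
  exact Classical.epsilon_spec
    (p := fun d => SReach src tgt s ch d ∧ SStable src s d) ⟨_, hreach, fun v => hd v.1 v.2⟩

theorem SRecurrent.sStable (hch : SRecurrent src tgt s ch)
    (hs : ∀ v, Relation.ReflTransGen (fun a b => ∃ e : E, src e = a ∧ tgt e = b) v s) :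
    SStable src s ch := by
  obtain ⟨c₂, rfl⟩ := hch 0
  exact (stab_spec _ hs).2

end

/-! ### The s-index -/

section

omit [Fintype V]

variable {ch : {v : V // v ≠ s} → ℕ}

theorem restrictS_phi : restrictS s (phi src tgt s ch) = ch :=
  restrictS_extendS_add_smul_deltaS _

theorem recurrent_phi (h : ∃ k : ℕ, Recurrent src tgt (extendS s ch + k • deltaS s)) :
    Recurrent src tgt (phi src tgt s ch) :=
  Nat.sInf_mem h

theorem Recurrent.phi_restrictS_apply_self_le (hc : Recurrent src tgt c) :
    phi src tgt s (restrictS s c) s ≤ c s := by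
  rw [phi, extendS_add_smul_deltaS_apply_self]
  exact Nat.sInf_le (by rwa [Set.mem_ofPred_eq, extendS_restrictS_add_smul_deltaS])

end

theorem LegalSeq.exists_legalSeq_self_of_lapApply_eq_zero {b : V → ℕ} {m : List V} {z : V → ℤ}
    (hm : LegalSeq src tgt m b d) (hz0 : 0 ≤ z) (hz : lapApply src tgt z = 0)
    (hzm : ∀ v, v ≠ s → z v ≤ firingVec m v) (hcd : ∀ v, v ≠ s → c v = d v)
    (hcs : z s * outdeg src s ≤ c s) : ∃ l, LegalSeq src tgt l c c ∧ firingVec l = z := by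
  obtain ⟨l, hlz, hl⟩ := exists_firingVec_eq_and_eachFiring (P := IsActive src tgt c) hz0
    fun x hx0 hx => by
      by_cases hxs : x s < z s
      · have hchips := chipsAfter_le_of_le (src := src) (tgt := tgt) (c := c) hx0 s
        rw [chipsAfter_zero, Pi.zero_apply, sub_zero] at hchips
        have : (outdeg src s : ℤ) * (x s + 1) ≤ outdeg src s * z s :=
          mul_le_mul_of_nonneg_left hxs (Nat.cast_nonneg _)
        exact ⟨s, hxs, by rw [IsActive]; linarith⟩
      · have hle : z ≤ firingVec m + x := fun v => by
          by_cases hv : v = s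
          · subst hv
            exact (not_lt.1 hxs).trans (le_add_of_nonneg_left (firingVec_nonneg m v))
          · exact (hzm v hv).trans (le_add_of_nonneg_right (hx0 v))
        obtain ⟨v, hv, hact⟩ := hm.exists_lt_isActive_of_lapApply_eq_zero hz hle hx.not_ge
        have hvs : v ≠ s := fun h => hxs (h ▸ hv)
        rw [IsActive, chipsAfter, ← hcd v hvs] at hact
        exact ⟨v, hv, hact⟩
  exact ⟨l, hl.legalSeq (chipsAfter_of_lapApply_eq_zero (hlz ▸ hz)), hlz⟩

theorem SRecurrent.exists_recurrent_extendS_add {r : V → ℕ} {ch : {v : V // v ≠ s} → ℕ}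
    (hch : SRecurrent src tgt s ch)
    (hs : ∀ v, Relation.ReflTransGen (fun a b => ∃ e : E, src e = a ∧ tgt e = b) v s)
    (hpos : ∀ v, 0 < r v) (hlap : lapApply src tgt (fun v => (r v : ℤ)) = 0) :
    ∃ k : ℕ, Recurrent src tgt (extendS s ch + k • deltaS s) := by
  have : Nonempty V := ⟨s⟩
  let full : {v : V // v ≠ s} → ℕ := fun v => r v.1 * outdeg src v.1
  obtain ⟨c₂, hstab⟩ := hch full
  have hreach := (stab_spec (full + c₂) hs).1
  rw [hstab, ← restrictS_extendS_add_smul_deltaS (ch := full + c₂) 0] at hreach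
  obtain ⟨m, d, -, hm, hd⟩ := sReach_restrictS_iff.1 hreach
  have hdv (v : V) (hv : v ≠ s) : d v = ch ⟨v, hv⟩ := congrFun hd ⟨v, hv⟩
  obtain ⟨l, hl, hlr⟩ := hm.exists_legalSeq_self_of_lapApply_eq_zero
    (c := extendS s ch + (r s * outdeg src s) • deltaS s) (fun v => Nat.cast_nonneg (r v)) hlap
    (fun v hv => hm.le_firingVec_of_mul_outdeg_le (hdv v hv ▸ hch.sStable hs ⟨v, hv⟩) (by
      rw [extendS_add_smul_deltaS_apply_of_ne hv]
      exact Nat.le_add_right _ _))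
    (fun v hv => by rw [extendS_add_smul_deltaS_apply_of_ne hv, hdv v hv])
    (by rw [extendS_add_smul_deltaS_apply_self, Nat.cast_mul])
  refine ⟨_, hl.recurrent fun v => List.count_pos_iff.1 ?_⟩
  have hcount : (l.count v : ℤ) = r v := congrFun hlr v
  have := hpos v
  omega

theorem LegalSeq.pos_of_forall_outdeg_lt (h : LegalSeq src tgt l c d) (hmem : s ∈ l)
    (hlt : EachFiring (fun x v => v = s → outdeg src s < chipsAfter src tgt c x s) l) :
    0 < d s := by
  induction l using List.reverseRecOn generalizing d with
  | nil => exact absurd hmem List.not_mem_nil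
  | append_singleton l v ih =>
    obtain ⟨e, hl, -, rfl⟩ := legalSeq_append_singleton.1 h
    obtain ⟨hlt, hv⟩ := eachFiring_append_singleton.1 hlt
    by_cases hvs : v = s
    · have hes := hv hvs
      rw [← hl.cast_apply] at hes
      simp only [fire, hvs, if_true]
      omega
    · have hes := ih hl (by simpa [Ne.symm hvs] using hmem) hlt
      simp only [fire, if_neg (Ne.symm hvs)]
      omega

/-- Otherwise one chip could be removed from `s` without making any firing of `l` illegal. -/
theorem LegalSeq.exists_chipsAfter_eq_outdeg (hl : LegalSeq src tgt l c c)
    (hmem : ∀ v, v ∈ l)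
    (hmin : ∀ d, Recurrent src tgt d → (∀ v, v ≠ s → d v = c v) → c s ≤ d s) :
    ∃ (i : ℕ) (hi : i < l.length), l[i] = s ∧
      chipsAfter src tgt c (firingVec (l.take i)) s = outdeg src s := by
  have : Nonempty V := ⟨s⟩
  by_contra! hne
  have hlt : EachFiring (fun x v => v = s → outdeg src s < chipsAfter src tgt c x s) l :=
    fun i hi his => lt_of_le_of_ne (his ▸ hl.eachFiring i hi) (hne i hi his).symm
  have hpos : 0 < c s := hl.pos_of_forall_outdeg_lt (hmem s) hlt
  let d : V → ℕ := Function.update c s (c s - 1)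
  have hds : d s = c s - 1 := Function.update_self ..
  have hdv (v : V) (hv : v ≠ s) : d v = c v := Function.update_of_ne hv ..
  have hact : EachFiring (IsActive src tgt d) l := fun i hi => by
    by_cases his : l[i] = s
    · have := hlt i hi his
      rw [his, IsActive]
      rw [chipsAfter] at this ⊢
      omega
    · have := hl.eachFiring i hi
      rwa [IsActive, chipsAfter, ← hdv _ his] at this
  have hld : LegalSeq src tgt l d d :=
    hact.legalSeq (chipsAfter_of_lapApply_eq_zero hl.lapApply_firingVec)
  have := hmin d (hld.recurrent hmem) hdv
  omega

end

/-- For s-recurrent `ĉ` with `c := φ(ĉ)` there is a legal firing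
sequence from `c` back to itself such that (i) every vertex `v` is fired exactly `r(v)`
times, (ii) whenever `s` is fired all other vertices are stable in the current
configuration, and (iii) at some firing of `s` the vertex `s` holds exactly `deg⁺(s)`
chips. -/
theorem refined_legal_sequence [Nonempty V] (src tgt : E → V)
    (hG : StronglyConnected src tgt) (s : V) (r : V → ℕ)
    (hr : IsPeriodVector src tgt r) (ch : {v : V // v ≠ s} → ℕ)
    (hch : SRecurrent src tgt s ch) :
    ∃ l : List V,
      LegalSeq src tgt l (phi src tgt s ch) (phi src tgt s ch) ∧
      (∀ v : V, l.count v = r v) ∧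
      (∀ (i : ℕ) (hi : i < l.length), l.get ⟨i, hi⟩ = s →
        ∀ v : V, v ≠ s → iterFire src tgt (phi src tgt s ch) (l.take i) v < outdeg src v) ∧
      (∃ (i : ℕ) (hi : i < l.length), l.get ⟨i, hi⟩ = s ∧
        iterFire src tgt (phi src tgt s ch) (l.take i) s = outdeg src s) := by
  have hs (v : V) := hG v s
  have hrec : Recurrent src tgt (phi src tgt s ch) :=
    recurrent_phi (hch.exists_recurrent_extendS_add hs hr.1 hr.2.2.1)
  have hstable (v : V) (hv : v ≠ s) : phi src tgt s ch v < outdeg src v :=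
    (congrFun restrictS_phi ⟨v, hv⟩).trans_lt (hch.sStable hs ⟨v, hv⟩)
  obtain ⟨l₀, hl₀, hl₀r⟩ := hrec.exists_legalSeq_firingVec_eq hr
  obtain ⟨l, hl, hll₀, hpostponed⟩ := hl₀.exists_eachFiring_imp_forall_ne_lt_outdeg hstable
  have hcount (v : V) : l.count v = r v :=
    Nat.cast_injective (R := ℤ) (congrFun (hll₀.trans hl₀r) v)
  have hmem (v : V) : v ∈ l := List.count_pos_iff.1 (hcount v ▸ hr.1 v)
  refine ⟨l, hl, hcount, fun i hi his v hv => ?_, ?_⟩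
  · exact_mod_cast (hl.cast_iterFire_take i v).trans_lt (hpostponed i hi his v hv)
  · obtain ⟨i, hi, his, heq⟩ := hl.exists_chipsAfter_eq_outdeg hmem fun d hd hdv => by
      have hd_restrict : restrictS s d = ch :=
        (funext fun v => hdv v.1 v.2 : restrictS s d = _).trans restrictS_phi
      exact hd_restrict ▸ hd.phi_restrictS_apply_self_le
    exact ⟨i, hi, his, by exact_mod_cast (hl.cast_iterFire_take i s).trans heq⟩

end SandpileBM
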